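/- Let G be a group, H a subgroup of index 2 (hence normal), s ∈ G with s ∉ H, and k a field. Let χ₁, χ₂ : H → kˣ be group homomorphisms, regarded as one-dimensional representations of H over k, and let χ₂^s denote the conjugate character h ↦ χ₂(s⁻¹ h s). Then there is an isomorphism of k-linear representations of G: Ind_H^G(χ₁) ⊗ Ind_H^G(χ₂) ≅ Ind_H^G(χ₁·χ₂) ⊕ Ind_H^G(χ₁·χ₂^s). -/

import Mathlib

open scoped TensorProduct

/-- The (co)induced representation space of a character `χ : H → kˣ`: functions
`f : G → k` with `f(hx) = χ(h)·f(x)` for all `h ∈ H`, `x ∈ G`. -/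
def IndSpace {k G : Type*} [Field k] [Group G] (H : Subgroup G) (χ : H →* kˣ) :
    Submodule k (G → k) where
  carrier := {f | ∀ (h : H) (x : G), f ((h : G) * x) = (χ h : k) * f x}
  add_mem' := by
    intro f g hf hg h x
    simp only [Set.mem_setOf_eq] at hf hg
    simp [Pi.add_apply, hf h x, hg h x, mul_add]
  zero_mem' := by intro h x; simp
  smul_mem' := by
    intro c f hf h x
    simp only [Set.mem_setOf_eq] at hf
    simp only [Pi.smul_apply, smul_eq_mul, hf h x]
    ring

/-- The representation of `G` on `IndSpace H χ` by right translation: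
`(g·f)(x) = f(xg)`.  This is the induced representation `Ind_H^G χ`. -/
noncomputable def IndRep {k G : Type*} [Field k] [Group G] (H : Subgroup G)
    (χ : H →* kˣ) : Representation k G (IndSpace H χ) where
  toFun g :=
    { toFun := fun f =>
        ⟨fun x => (f : G → k) (x * g), fun h x => by
          simpa [mul_assoc] using f.2 h (x * g)⟩
      map_add' := fun f₁ f₂ => Subtype.ext (funext fun x => rfl)
      map_smul' := fun c f => Subtype.ext (funext fun x => rfl) }
  map_one' := LinearMap.ext fun f => Subtype.ext (funext fun x => by simp)
  map_mul' := fun g₁ g₂ =>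
    LinearMap.ext fun f => Subtype.ext (funext fun x => by
      show (f : G → k) (x * (g₁ * g₂)) = (f : G → k) (x * g₁ * g₂)
      rw [mul_assoc])

/-- The conjugate character `χ^s : h ↦ χ(s⁻¹hs)` of a character of a normal
subgroup `H`. -/
def conjChar {k G : Type*} [Field k] [Group G] (H : Subgroup G) (hN : H.Normal)
    (s : G) (χ : H →* kˣ) : H →* kˣ where
  toFun h := χ ⟨s⁻¹ * (h : G) * s, by simpa using hN.conj_mem (h : G) h.2 s⁻¹⟩
  map_one' := by
    refine Eq.trans (congrArg χ (Subtype.ext ?_)) (map_one χ)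
    simp
  map_mul' := fun a b => by
    rw [← map_mul]
    refine congrArg χ (Subtype.ext ?_)
    simp only [Subgroup.coe_mul]
    group

open Classical in
/-- Evaluation at `1` and `s` identifies the induced space with `k × k`. -/
noncomputable def indEquiv {k G : Type*} [Field k] [Group G] (H : Subgroup G)
    (hH : H.index = 2) (s : G) (hs : s ∉ H) (χ : H →* kˣ) :
    IndSpace H χ ≃ₗ[k] k × k where
  toFun f := ((f : G → k) 1, (f : G → k) s)
  map_add' f g := rfl
  map_smul' c f := rfl
  invFun p := ⟨fun x => if hx : x ∈ H then (χ ⟨x, hx⟩ : k) * p.1 else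
      (χ ⟨x * s⁻¹, by
        rw [Subgroup.mul_mem_iff_of_index_two hH, inv_mem_iff]; tauto⟩ : k) * p.2, by
    intro h x
    by_cases hx : x ∈ H
    · have h2 : (h : G) * x ∈ H := H.mul_mem h.2 hx
      have e : (⟨(h : G) * x, h2⟩ : H) = h * ⟨x, hx⟩ := rfl
      simp only [hx, h2, dif_pos, e, map_mul, Units.val_mul, mul_assoc]
    · have h2 : (h : G) * x ∉ H := by rwa [H.mul_mem_cancel_left h.2]
      have h3 : x * s⁻¹ ∈ H := by
        rw [Subgroup.mul_mem_iff_of_index_two hH, inv_mem_iff]; tauto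
      have h4 : (h : G) * x * s⁻¹ ∈ H := by
        rw [mul_assoc]; exact H.mul_mem h.2 h3
      have e : (⟨(h : G) * x * s⁻¹, h4⟩ : H) = h * ⟨x * s⁻¹, h3⟩ :=
        Subtype.ext (mul_assoc _ _ _)
      simp only [hx, h2, not_false_eq_true, dif_neg, e, map_mul, Units.val_mul]
      exact mul_assoc _ _ _⟩
  left_inv f := by
    refine Subtype.ext (funext fun x => ?_)
    by_cases hx : x ∈ H
    · have := f.2 ⟨x, hx⟩ 1
      simp only [mul_one] at this
      simp [hx, this]
    · have h3 : x * s⁻¹ ∈ H := by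
        rw [Subgroup.mul_mem_iff_of_index_two hH, inv_mem_iff]; tauto
      have := f.2 ⟨x * s⁻¹, h3⟩ s
      simp only [inv_mul_cancel_right] at this
      simp [hx, this]
  right_inv p := by
    have e : (⟨1, H.one_mem⟩ : H) = 1 := rfl
    ext <;> simp [hs, H.one_mem, e]

/-- Pointwise product. -/
noncomputable def indMul {k G : Type*} [Field k] [Group G] (H : Subgroup G)
    (χ₁ χ₂ : H →* kˣ) :
    IndSpace H χ₁ ⊗[k] IndSpace H χ₂ →ₗ[k] IndSpace H (χ₁ * χ₂) :=
  TensorProduct.lift (LinearMap.mk₂ k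
    (fun f g => ⟨fun x => (f : G → k) x * (g : G → k) x, fun h x => by
      beta_reduce
      rw [f.2 h x, g.2 h x]; simp only [MonoidHom.mul_apply, Units.val_mul]; ring⟩)
    (fun _ _ _ => Subtype.ext (funext fun _ => add_mul _ _ _))
    (fun _ _ _ => Subtype.ext (funext fun _ => mul_assoc _ _ _))
    (fun _ _ _ => Subtype.ext (funext fun _ => mul_add _ _ _))
    (fun _ _ _ => Subtype.ext (funext fun _ => mul_left_comm _ _ _)))

/-- Left translation by `s⁻¹`, from `Ind χ` to `Ind χ^s`. -/
def indShift {k G : Type*} [Field k] [Group G] (H : Subgroup G) (hN : H.Normal)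
    (s : G) (χ : H →* kˣ) :
    IndSpace H χ →ₗ[k] IndSpace H (conjChar H hN s χ) where
  toFun f := ⟨fun x => (f : G → k) (s⁻¹ * x), fun h x => by
    have := f.2 ⟨s⁻¹ * (h : G) * s, by simpa using hN.conj_mem (h : G) h.2 s⁻¹⟩ (s⁻¹ * x)
    simp only [mul_assoc, mul_inv_cancel_left] at this
    beta_reduce
    rw [this]
    simp only [conjChar, MonoidHom.coe_mk, OneHom.coe_mk, mul_assoc]⟩
  map_add' _ _ := rfl
  map_smul' _ _ := rfl

/-- Mackey decomposition for an index-two subgroup: if `H ≤ G` has index `2`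
(hence is normal), `s ∉ H`, and `χ₁, χ₂ : H → kˣ` are characters, then
`Ind_H^G(χ₁) ⊗ Ind_H^G(χ₂) ≅ Ind_H^G(χ₁χ₂) ⊕ Ind_H^G(χ₁·χ₂^s)` as `k`-linear
representations of `G` (the direct sum being realised as a product with the
componentwise action). -/
theorem ind_tensor_ind_iso {k G : Type*} [Field k] [Group G] (H : Subgroup G)
    (hH : H.index = 2) (hN : H.Normal) (s : G) (hs : s ∉ H) (χ₁ χ₂ : H →* kˣ) :
    ∃ e : (IndSpace H χ₁ ⊗[k] IndSpace H χ₂) ≃ₗ[k]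
        (IndSpace H (χ₁ * χ₂) × IndSpace H (χ₁ * conjChar H hN s χ₂)),
      ∀ (g : G) (v : IndSpace H χ₁ ⊗[k] IndSpace H χ₂),
        e (((IndRep H χ₁).tprod (IndRep H χ₂)) g v) =
          (LinearMap.prodMap ((IndRep H (χ₁ * χ₂)) g)
            ((IndRep H (χ₁ * conjChar H hN s χ₂)) g)) (e v) := by
  let φ : (IndSpace H χ₁ ⊗[k] IndSpace H χ₂) →ₗ[k]
      (IndSpace H (χ₁ * χ₂) × IndSpace H (χ₁ * conjChar H hN s χ₂)) :=
    (indMul H χ₁ χ₂).prod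
      (indMul H χ₁ (conjChar H hN s χ₂) ∘ₗ (indShift H hN s χ₂).lTensor _)
  have hφ1 : ∀ f g x, ((φ (f ⊗ₜ g)).1 : G → k) x = (f : G → k) x * (g : G → k) x :=
    fun f g x => rfl
  have hφ2 : ∀ f g x, ((φ (f ⊗ₜ g)).2 : G → k) x = (f : G → k) x * (g : G → k) (s⁻¹ * x) :=
    fun f g x => rfl
  let E := fun χ : H →* kˣ => indEquiv H hH s hs χ
  have hEa : ∀ χ f, (E χ f).1 = (f : G → k) 1 := fun χ f => rfl
  have hEb : ∀ χ f, (E χ f).2 = (f : G → k) s := fun χ f => rfl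
  have hE1 : ∀ χ p, (((E χ).symm p : IndSpace H χ) : G → k) 1 = p.1 := fun χ p =>
    congrArg Prod.fst ((E χ).apply_symm_apply p)
  have hE2 : ∀ χ p, (((E χ).symm p : IndSpace H χ) : G → k) s = p.2 := fun χ p =>
    congrArg Prod.snd ((E χ).apply_symm_apply p)
  have hss : s * s ∈ H := by rw [Subgroup.mul_mem_iff_of_index_two hH]
  have hE3 : ∀ χ p, (((E χ).symm p : IndSpace H χ) : G → k) s⁻¹ =
      ((χ ⟨s * s, hss⟩ : kˣ) : k)⁻¹ * p.2 := fun χ p => by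
    have := ((E χ).symm p).2 ⟨s * s, hss⟩ s⁻¹
    simp only [mul_inv_cancel_right] at this
    rw [hE2] at this
    rw [this, inv_mul_cancel_left₀ (Units.ne_zero _)]
  have hfin : ∀ χ : H →* kˣ, Module.Finite k (IndSpace H χ) := fun χ =>
    Module.Finite.equiv (E χ).symm
  have hrk : ∀ χ : H →* kˣ, Module.finrank k (IndSpace H χ) = 2 := fun χ => by
    rw [(E χ).finrank_eq]; simp
  have hsurj : Function.Surjective φ := by
    rintro ⟨F, F'⟩
    let d1 := (E χ₁).symm (1, 0)
    let d2 := (E χ₁).symm (0, 1)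
    let e1 := (E χ₂).symm (1, 0)
    let e2 := (E χ₂).symm (0, 1)
    refine ⟨(F : G → k) 1 • (d1 ⊗ₜ e1) + (F : G → k) s • (d2 ⊗ₜ e2)
      + ((F' : G → k) 1 * ((χ₂ ⟨s * s, hss⟩ : kˣ) : k)) • (d1 ⊗ₜ e2)
      + (F' : G → k) s • (d2 ⊗ₜ e1), ?_⟩
    refine Prod.ext ((E _).injective (Prod.ext ?_ ?_)) ((E _).injective (Prod.ext ?_ ?_))
    · simp [hEa, hEb, hφ1, hE1, d1, d2, e1, e2]
    · simp [hEa, hEb, hφ1, hE2, d1, d2, e1, e2]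
    · simp [hEa, hEb, hφ2, hE1, hE3, d1, d2, e1, e2]
    · simp [hEa, hEb, hφ2, hE1, hE2, d1, d2, e1, e2]
  have hdim : Module.finrank k (IndSpace H χ₁ ⊗[k] IndSpace H χ₂) =
      Module.finrank k (IndSpace H (χ₁ * χ₂) × IndSpace H (χ₁ * conjChar H hN s χ₂)) := by
    rw [Module.finrank_tensorProduct, Module.finrank_prod, hrk, hrk, hrk, hrk]
  have hinj : Function.Injective φ :=
by
    have h := LinearMap.injective_iff_surjective_of_finrank_eq_finrank (K := k)
      (V := IndSpace H χ₁ ⊗[k] IndSpace H χ₂)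
      (V₂ := IndSpace H (χ₁ * χ₂) × IndSpace H (χ₁ * conjChar H hN s χ₂)) hdim (f := φ)
    exact h.2 hsurj
  have hbij : Function.Bijective φ := ⟨hinj, hsurj⟩
  refine ⟨LinearEquiv.ofBijective φ hbij, fun g v => ?_⟩
  simp only [LinearEquiv.ofBijective_apply]
  induction v using TensorProduct.induction_on with
  | zero => simp only [map_zero]
  | add a b ha hb => simp only [map_add, ha, hb]
  | tmul a b =>
    refine Prod.ext (Subtype.ext (funext fun x => rfl)) (Subtype.ext (funext fun x => ?_))
    change (a : G → k) (x * g) * (b : G → k) (s⁻¹ * x * g) =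
      (a : G → k) (x * g) * (b : G → k) (s⁻¹ * (x * g))
    rw [mul_assoc]
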